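/- arXiv:math/0702830 — 3 statements merged into one kernel-verified Lean document; each statement's English description precedes it below -/
import Mathlib

section
/- For every γ with γ > 1/2 and γ ≠ 1, and every σ > 0, the Fisher information for the scale parameter of the GPD is infinite: the integral over (0, σ/γ) of s(x)² · g(x; γ, σ) dx diverges (equals +∞), where s(x) = −1/σ + (1/γ − 1)·γx/(σ(σ − γx)) is the score ∂/∂σ log g(x; γ, σ). -/
open MeasureTheory

/-- The density of the generalized Pareto distribution (GPD):
`g(x) = (1/σ)(1 - γx/σ)^(1/γ - 1)` (real power); for `γ > 0` its support is `(0, σ/γ)`. -/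
noncomputable def gpdPdf (γ σ x : ℝ) : ℝ :=
  (1 / σ) * (1 - γ * x / σ) ^ (1 / γ - 1)

/-- The score for the scale parameter of the GPD,
`s(x) = ∂/∂σ log g(x; γ, σ) = −1/σ + (1/γ − 1)·γx/(σ(σ − γx))`. -/
noncomputable def gpdScaleScore (γ σ x : ℝ) : ℝ :=
  -1 / σ + (1 / γ - 1) * (γ * x) / (σ * (σ - γ * x))

/-!
Near the endpoint `b = σ / γ` of the support, `(b - x) * s x` tends to `(1 / γ - 1) / γ ≠ 0`, so the
squared score blows up like `(b - x)⁻²`. Since `1 / γ - 1 ≤ 1`, the density is at least a constant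
multiple of `b - x`. Hence the integrand dominates a multiple of `(b - x)⁻¹`, which is not
integrable at `b`.
-/

open Filter Set Topology

theorem lintegral_Ioo_inv_sub_eq_top {a b : ℝ} (hab : a < b) :
    ∫⁻ x in Ioo a b, ENNReal.ofReal (b - x)⁻¹ = ⊤ := by
  have hmeas : AEStronglyMeasurable (fun x : ℝ ↦ (b - x)⁻¹) (volume.restrict (Ioo a b)) :=
    Measurable.aestronglyMeasurable (by fun_prop)
  have hnonneg : 0 ≤ᵐ[volume.restrict (Ioo a b)] fun x : ℝ ↦ (b - x)⁻¹ := by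
    filter_upwards [ae_restrict_mem measurableSet_Ioo] with x hx
    exact inv_nonneg.2 (sub_nonneg.2 hx.2.le)
  by_contra hfin
  have hint : IntervalIntegrable (fun x : ℝ ↦ (b - x)⁻¹) volume a b :=
    (intervalIntegrable_iff_integrableOn_Ioo_of_le hab.le).2
      ((lintegral_ofReal_ne_top_iff_integrable hmeas hnonneg).1 hfin)
  have hint_neg : IntervalIntegrable (fun x : ℝ ↦ (x - b)⁻¹) volume a b := by
    simpa only [Pi.neg_def, ← inv_neg, neg_sub] using hint.neg
  rcases intervalIntegrable_sub_inv_iff.1 hint_neg with h_eq | h_notMem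
  · exact hab.ne h_eq
  · exact h_notMem right_mem_uIcc

theorem lintegral_Ioo_ofReal_eq_top_of_eventually_le_sub_mul {f : ℝ → ℝ} {a b K : ℝ} (hab : a < b)
    (hK : 0 < K) (hf : ∀ᶠ x in 𝓝[<] b, K ≤ (b - x) * f x) :
    ∫⁻ x in Ioo a b, ENNReal.ofReal (f x) = ⊤ := by
  obtain ⟨c, ⟨hac, hcb⟩, hc⟩ := (mem_nhdsLT_iff_exists_mem_Ico_Ioo_subset hab).1 hf
  have hle : ∀ x ∈ Ioo c b,
      ENNReal.ofReal K * ENNReal.ofReal (b - x)⁻¹ ≤ ENNReal.ofReal (f x) := by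
    intro x hx
    rw [← ENNReal.ofReal_mul hK.le, ← div_eq_mul_inv]
    exact ENNReal.ofReal_le_ofReal ((div_le_iff₀' (sub_pos.2 hx.2)).2 (hc hx))
  refine top_le_iff.1 ?_
  calc ⊤ = ENNReal.ofReal K * ∫⁻ x in Ioo c b, ENNReal.ofReal (b - x)⁻¹ := by
        rw [lintegral_Ioo_inv_sub_eq_top hcb, ENNReal.mul_top (ENNReal.ofReal_pos.2 hK).ne']
    _ = ∫⁻ x in Ioo c b, ENNReal.ofReal K * ENNReal.ofReal (b - x)⁻¹ :=
        (lintegral_const_mul _ (by fun_prop)).symm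
    _ ≤ ∫⁻ x in Ioo c b, ENNReal.ofReal (f x) := setLIntegral_mono' measurableSet_Ioo hle
    _ ≤ ∫⁻ x in Ioo a b, ENNReal.ofReal (f x) := lintegral_mono_set (Ioo_subset_Ioo_left hac)

theorem sub_mul_gpdScaleScore {γ σ x : ℝ} (hγ : γ ≠ 0) (hσ : σ ≠ 0) (hx : x ≠ σ / γ) :
    (σ / γ - x) * gpdScaleScore γ σ x = ((1 / γ - 1) * x - (σ / γ - x)) / σ := by
  have hb : σ / γ - x ≠ 0 := sub_ne_zero.2 hx.symm
  have hsub : σ - γ * x = γ * (σ / γ - x) := by field_simp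
  rw [gpdScaleScore, hsub]
  generalize σ / γ - x = d at hb ⊢
  field_simp
  ring

theorem tendsto_sub_mul_gpdScaleScore {γ σ : ℝ} (hγ : γ ≠ 0) (hσ : σ ≠ 0) :
    Tendsto (fun x ↦ (σ / γ - x) * gpdScaleScore γ σ x) (𝓝[≠] (σ / γ))
      (𝓝 ((1 / γ - 1) / γ)) := by
  have hcont : Continuous fun x : ℝ ↦ ((1 / γ - 1) * x - (σ / γ - x)) / σ := by fun_prop
  have hlim : ((1 / γ - 1) * (σ / γ) - (σ / γ - σ / γ)) / σ = (1 / γ - 1) / γ := by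
    field_simp
    ring
  rw [← hlim]
  refine (hcont.continuousAt.tendsto.mono_left nhdsWithin_le_nhds).congr' ?_
  filter_upwards [self_mem_nhdsWithin] with x hx
  exact (sub_mul_gpdScaleScore hγ hσ hx).symm

theorem mul_sub_le_gpdPdf {γ σ x : ℝ} (hγ : 1 / 2 ≤ γ) (hσ : 0 < σ) (hx : x ∈ Ico 0 (σ / γ)) :
    γ / σ ^ 2 * (σ / γ - x) ≤ gpdPdf γ σ x := by
  have hγ0 : 0 < γ := by linarith
  have hpos : 0 < 1 - γ * x / σ := by
    rw [sub_pos, div_lt_one hσ]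
    exact (lt_div_iff₀' hγ0).1 hx.2
  have hx0 : 0 ≤ x := hx.1
  have hle_one : 1 - γ * x / σ ≤ 1 := sub_le_self _ (by positivity)
  have hexp : 1 / γ - 1 ≤ 1 := by
    rw [sub_le_iff_le_add, div_le_iff₀ hγ0]
    linarith
  calc γ / σ ^ 2 * (σ / γ - x) = 1 / σ * (1 - γ * x / σ) ^ (1 : ℝ) := by
        rw [Real.rpow_one]
        field_simp
    _ ≤ 1 / σ * (1 - γ * x / σ) ^ (1 / γ - 1) := by
        gcongr 1 / σ * ?_
        exact Real.rpow_le_rpow_of_exponent_ge hpos hle_one hexp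

theorem gpd_scale_fisher_information_infinite_general (γ σ : ℝ)
    (hγ : 1 / 2 ≤ γ) (hγ1 : γ ≠ 1) (hσ : 0 < σ) :
    ∫⁻ x in Ioo 0 (σ / γ),
      ENNReal.ofReal ((gpdScaleScore γ σ x) ^ 2 * gpdPdf γ σ x) = ⊤ := by
  have hγ0 : 0 < γ := by linarith
  have hb : 0 < σ / γ := by positivity
  let L := (1 / γ - 1) / γ
  have hL0 : L ≠ 0 := div_ne_zero (sub_ne_zero.2 (by rwa [one_div, inv_ne_one])) hγ0.ne'
  have hscore : ∀ᶠ x in 𝓝[<] (σ / γ), L ^ 2 / 2 < ((σ / γ - x) * gpdScaleScore γ σ x) ^ 2 :=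
    (((tendsto_sub_mul_gpdScaleScore hγ0.ne' hσ.ne').pow 2).mono_left
      (nhdsLT_le_nhdsNE _)).eventually_const_lt (half_lt_self (by positivity))
  refine lintegral_Ioo_ofReal_eq_top_of_eventually_le_sub_mul (K := L ^ 2 / 2 * (γ / σ ^ 2)) hb
    (by positivity) ?_
  filter_upwards [hscore, Ioo_mem_nhdsLT hb] with x hx hmem
  have hpos : 0 < σ / γ - x := sub_pos.2 hmem.2
  calc L ^ 2 / 2 * (γ / σ ^ 2)
      ≤ ((σ / γ - x) * gpdScaleScore γ σ x) ^ 2 * (γ / σ ^ 2) := by gcongr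
    _ = (σ / γ - x) * (gpdScaleScore γ σ x ^ 2 * (γ / σ ^ 2 * (σ / γ - x))) := by ring
    _ ≤ (σ / γ - x) * (gpdScaleScore γ σ x ^ 2 * gpdPdf γ σ x) := by
        gcongr
        exact mul_sub_le_gpdPdf hγ hσ (Ioo_subset_Ico_self hmem)

/-- For every `γ` with `γ > 1/2` and `γ ≠ 1`, and every `σ > 0`, the Fisher
information for the scale parameter of the GPD is infinite: the (Lebesgue)
integral over `(0, σ/γ)` of `s(x)² · g(x; γ, σ)` diverges to `+∞`. -/
theorem gpd_scale_fisher_information_infinite (γ σ : ℝ)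
    (hγ : 1 / 2 < γ) (hγ1 : γ ≠ 1) (hσ : 0 < σ) :
    ∫⁻ x in Set.Ioo 0 (σ / γ),
      ENNReal.ofReal ((gpdScaleScore γ σ x) ^ 2 * gpdPdf γ σ x) = ⊤ :=
  gpd_scale_fisher_information_infinite_general γ σ hγ.le hγ1 hσ
end

section
/- For every γ with γ > 1/2 and γ ≠ 1, every μ ∈ ℝ and every σ > 0, the Fisher information for the location parameter of the GEV is infinite: writing u(x) = 1 − γ(x−μ)/σ, the integral over {x : u(x) > 0} of s(x)² · h(x; γ, μ, σ) dx diverges (equals +∞), where s(x) = (γ/σ)·[(1/γ − 1)/u(x) − (1/γ)·u(x)^{1/γ − 1}] is the score ∂/∂μ log h(x; γ, μ, σ). -/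
open MeasureTheory

/-- The density of the generalized extreme value (GEV) distribution:
`h(x) = (1/σ)(1 - γ(x-μ)/σ)^(1/γ - 1) exp (-(1 - γ(x-μ)/σ)^(1/γ))` (real powers). -/
noncomputable def gevPdf (γ μ σ x : ℝ) : ℝ :=
  (1 / σ) * (1 - γ * (x - μ) / σ) ^ (1 / γ - 1) *
    Real.exp (-(1 - γ * (x - μ) / σ) ^ (1 / γ))

/-- The score for the location parameter of the GEV: writing
`u(x) = 1 - γ(x-μ)/σ`,
`s(x) = ∂/∂μ log h(x; γ, μ, σ) = (γ/σ)·[(1/γ − 1)/u(x) − (1/γ)·u(x)^(1/γ − 1)]`. -/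
noncomputable def gevLocScore (γ μ σ x : ℝ) : ℝ :=
  (γ / σ) * ((1 / γ - 1) / (1 - γ * (x - μ) / σ) -
    (1 / γ) * (1 - γ * (x - μ) / σ) ^ (1 / γ - 1))

/-!
In the variable `u = 1 - γ (x - μ) / σ`, with `p = 1 / γ`, the integrand `s² h` is a constant times
`(p - 1 - p u ^ p)² exp (-u ^ p) u ^ (p - 3)`, which is asymptotic to `(p - 1)² u ^ (p - 3)` at the
endpoint `u = 0` of the support. Since `p ≤ 2` and `p ≠ 1`, this singularity is not integrable.
-/

section

open Filter Topology Asymptotics Set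

lemma setLIntegral_preimage_mul_add {a : ℝ} (ha : a ≠ 0) (b : ℝ) (f : ℝ → ENNReal) (s : Set ℝ) :
    ∫⁻ x in (fun x => a * x + b) ⁻¹' s, f (a * x + b) = ENNReal.ofReal |a⁻¹| * ∫⁻ u in s, f u := by
  have affine_emb : MeasurableEmbedding fun x : ℝ => a * x + b :=
    (measurableEmbedding_addRight b).comp (measurableEmbedding_mulLeft₀ ha)
  have map_affine : volume.map (fun x : ℝ => a * x + b) = ENNReal.ofReal |a⁻¹| • volume := by
    calc volume.map (fun x : ℝ => a * x + b)
        = (volume.map (a * ·)).map (· + b) :=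
          (Measure.map_map (measurable_add_const b) (measurable_const_mul a)).symm
      _ = ENNReal.ofReal |a⁻¹| • volume := by
          rw [Real.map_volume_mul_left ha, Measure.map_smul, map_add_right_eq_self]
  rw [← affine_emb.lintegral_map, ← affine_emb.restrict_map, map_affine, Measure.restrict_smul,
    lintegral_smul_measure, smul_eq_mul]

lemma setLIntegral_ofReal_eq_top_of_isBigO {α E : Type*} [MeasurableSpace α]
    [NormedAddCommGroup E] {μ : Measure α} {l : Filter α} [l.IsMeasurablyGenerated]
    {s : Set α} {f : α → ℝ} {g : α → E} (hs : s ∈ l)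
    (hf : AEStronglyMeasurable f (μ.restrict s)) (hf0 : 0 ≤ᵐ[μ.restrict s] f)
    (hg : StronglyMeasurableAtFilter g l μ) (hgf : g =O[l] f)
    (hg_int : ¬ IntegrableAtFilter g l μ) :
    ∫⁻ x in s, ENNReal.ofReal (f x) ∂μ = ⊤ := by
  by_contra hfin
  have hf_int : IntegrableOn f s μ := (lintegral_ofReal_ne_top_iff_integrable hf hf0).mp hfin
  exact hg_int (hgf.integrableAtFilter hg ⟨s, hs, hf_int⟩)

lemma not_integrableAtFilter_rpow_nhdsGT_zero {s : ℝ} (hs : s ≤ -1) :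
    ¬ IntegrableAtFilter (fun x : ℝ => x ^ s) (𝓝[>] 0) := by
  rintro ⟨t, ht, h_int⟩
  obtain ⟨ε, hε, hεt⟩ := mem_nhdsGT_iff_exists_Ioo_subset.mp ht
  exact hs.not_gt ((intervalIntegral.integrableOn_Ioo_rpow_iff hε).mp (h_int.mono_set hεt))

/-- The integrand `s² h` of the Fisher information for the GEV location parameter, in the variable
`u = 1 - γ (x - μ) / σ`, with `p = 1 / γ` and without the constant factor `γ² / σ³`. It has the
intended meaning for `0 < u` only. -/
noncomputable def gevLocInfoDensity (p u : ℝ) : ℝ :=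
  ((p - 1) / u - p * u ^ (p - 1)) ^ 2 * (u ^ (p - 1) * Real.exp (-u ^ p))

lemma measurable_gevLocInfoDensity (p : ℝ) : Measurable (gevLocInfoDensity p) := by
  unfold gevLocInfoDensity
  fun_prop

lemma gevLocInfoDensity_nonneg (p : ℝ) {u : ℝ} (hu : 0 ≤ u) : 0 ≤ gevLocInfoDensity p u := by
  unfold gevLocInfoDensity
  positivity

lemma gevLocInfoDensity_eq_mul_rpow (p : ℝ) {u : ℝ} (hu : 0 < u) :
    gevLocInfoDensity p u = (p - 1 - p * u ^ p) ^ 2 * Real.exp (-u ^ p) * u ^ (p - 3) := by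
  have rpow_sub_three : u ^ (p - 3) = u ^ p / u ^ 3 := by
    exact_mod_cast Real.rpow_sub_natCast hu.ne' p 3
  rw [gevLocInfoDensity, Real.rpow_sub_one hu.ne', rpow_sub_three]
  field_simp

lemma gevLocInfoDensity_isEquivalent {p : ℝ} (hp : 0 < p) (hp1 : p ≠ 1) :
    gevLocInfoDensity p ~[𝓝[>] 0] fun u => (p - 1) ^ 2 * u ^ (p - 3) := by
  have rpow_tendsto : Tendsto (fun u : ℝ => u ^ p) (𝓝[>] 0) (𝓝 0) := by
    simpa only [Real.zero_rpow hp.ne'] using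
      (Real.continuousAt_rpow_const 0 p (.inr hp.le)).tendsto.mono_left nhdsWithin_le_nhds
  have factor_tendsto : Tendsto (fun u : ℝ => (p - 1 - p * u ^ p) ^ 2 * Real.exp (-u ^ p))
      (𝓝[>] 0) (𝓝 ((p - 1) ^ 2)) := by
    simpa using ((rpow_tendsto.const_mul p).const_sub (p - 1)).pow 2 |>.mul
      (Real.continuous_exp.tendsto _ |>.comp rpow_tendsto.neg)
  have factor_isEquivalent :=
    (isEquivalent_const_iff_tendsto (pow_ne_zero 2 (sub_ne_zero.mpr hp1))).mpr factor_tendsto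
  refine (factor_isEquivalent.mul IsEquivalent.refl).congr_left ?_
  filter_upwards [self_mem_nhdsWithin] with u hu
  exact (gevLocInfoDensity_eq_mul_rpow p hu).symm

lemma setLIntegral_gevLocInfoDensity_eq_top {p : ℝ} (hp : 0 < p) (hp2 : p ≤ 2) (hp1 : p ≠ 1) :
    ∫⁻ u in Ioi 0, ENNReal.ofReal (gevLocInfoDensity p u) = ⊤ := by
  have rpow_isBigO : (fun u : ℝ => u ^ (p - 3)) =O[𝓝[>] 0] gevLocInfoDensity p :=
    (isBigO_const_mul_left_iff (pow_ne_zero 2 (sub_ne_zero.mpr hp1))).mp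
      (gevLocInfoDensity_isEquivalent hp hp1).isBigO_symm
  refine setLIntegral_ofReal_eq_top_of_isBigO self_mem_nhdsWithin
    (measurable_gevLocInfoDensity p).aestronglyMeasurable ?_
    (Measurable.aestronglyMeasurable (by fun_prop)).stronglyMeasurableAtFilter rpow_isBigO
    (not_integrableAtFilter_rpow_nhdsGT_zero (by linarith))
  exact ae_restrict_of_forall_mem measurableSet_Ioi fun u hu =>
    gevLocInfoDensity_nonneg p (le_of_lt hu)

lemma gevLocScore_sq_mul_gevPdf (γ μ σ x : ℝ) :
    gevLocScore γ μ σ x ^ 2 * gevPdf γ μ σ x =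
      γ ^ 2 / σ ^ 3 * gevLocInfoDensity (1 / γ) (1 - γ * (x - μ) / σ) := by
  unfold gevLocScore gevPdf gevLocInfoDensity
  ring

lemma setLIntegral_gevLocScore_sq_mul_gevPdf {γ σ : ℝ} (hγ : γ ≠ 0) (μ : ℝ) (hσ : 0 < σ) :
    ∫⁻ x in {x : ℝ | 0 < 1 - γ * (x - μ) / σ},
        ENNReal.ofReal (gevLocScore γ μ σ x ^ 2 * gevPdf γ μ σ x) =
      ENNReal.ofReal (|γ| / σ ^ 2) *
        ∫⁻ u in Ioi 0, ENNReal.ofReal (gevLocInfoDensity (1 / γ) u) := by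
  have affine (x : ℝ) : 1 - γ * (x - μ) / σ = -(γ / σ) * x + (1 + γ * μ / σ) := by ring
  have slope_ne_zero : -(γ / σ) ≠ 0 := neg_ne_zero.mpr (div_ne_zero hγ hσ.ne')
  have scale_nonneg : 0 ≤ γ ^ 2 / σ ^ 3 := by positivity
  have constants : γ ^ 2 / σ ^ 3 * |(-(γ / σ))⁻¹| = |γ| / σ ^ 2 := by
    rw [abs_inv, abs_neg, abs_div, abs_of_pos hσ, ← sq_abs γ]
    field_simp
  simp only [gevLocScore_sq_mul_gevPdf, affine, ENNReal.ofReal_mul scale_nonneg]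
  rw [lintegral_const_mul' _ _ ENNReal.ofReal_ne_top, ← constants, ENNReal.ofReal_mul scale_nonneg,
    mul_assoc]
  congr 1
  exact setLIntegral_preimage_mul_add slope_ne_zero _
    (fun u => ENNReal.ofReal (gevLocInfoDensity (1 / γ) u)) (Ioi 0)

theorem gev_location_fisher_information_infinite_general (γ μ σ : ℝ)
    (hγ : 1 / 2 ≤ γ) (hγ1 : γ ≠ 1) (hσ : 0 < σ) :
    ∫⁻ x in {x : ℝ | 0 < 1 - γ * (x - μ) / σ},
      ENNReal.ofReal ((gevLocScore γ μ σ x) ^ 2 * gevPdf γ μ σ x) = ⊤ := by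
  have hγ0 : 0 < γ := by linarith
  have exponent_le_two : 1 / γ ≤ 2 := by
    rw [div_le_iff₀ hγ0]
    linarith
  have exponent_ne_one : 1 / γ ≠ 1 := by rwa [one_div, inv_ne_one]
  have constant_ne_zero : ENNReal.ofReal (|γ| / σ ^ 2) ≠ 0 :=
    (ENNReal.ofReal_pos.mpr (by positivity)).ne'
  rw [setLIntegral_gevLocScore_sq_mul_gevPdf hγ0.ne' μ hσ,
    setLIntegral_gevLocInfoDensity_eq_top (one_div_pos.mpr hγ0) exponent_le_two exponent_ne_one,
    ENNReal.mul_top constant_ne_zero]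

end

/-- For every `γ` with `γ > 1/2` and `γ ≠ 1`, every `μ ∈ ℝ` and every `σ > 0`,
the Fisher information for the location parameter of the GEV is infinite: the
(Lebesgue) integral over the support `{x : 1 - γ(x-μ)/σ > 0}` of
`s(x)² · h(x; γ, μ, σ)` diverges to `+∞`. -/
theorem gev_location_fisher_information_infinite (γ μ σ : ℝ)
    (hγ : 1 / 2 < γ) (hγ1 : γ ≠ 1) (hσ : 0 < σ) :
    ∫⁻ x in {x : ℝ | 0 < 1 - γ * (x - μ) / σ},
      ENNReal.ofReal ((gevLocScore γ μ σ x) ^ 2 * gevPdf γ μ σ x) = ⊤ :=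
  gev_location_fisher_information_infinite_general γ μ σ hγ.le hγ1 hσ
end

section
/- Fix γ > 0, σ > 0 and an ordered sample x_1 < x_2 < ⋯ < x_n of reals. As μ decreases to x_n − σ/γ (equivalently, as the upper endpoint μ + σ/γ decreases to the largest observation x_n), the maximum product of spacings objective for the GEV, M(γ, μ, σ) = −∑_{i=1}^{n+1} log[H(x_i; γ, μ, σ) − H(x_{i−1}; γ, μ, σ)] with H(x_0) ≡ 0 and H(x_{n+1}) ≡ 1, tends to +∞; hence the MPS objective does not collapse at the boundary of the parameter space. -/
/-- The cdf of the generalized extreme value (GEV) distribution: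
`H(x) = exp (-(1 - γ(x-μ)/σ) ^ (1/γ))` (real power). -/
noncomputable def gevCdf (γ μ σ x : ℝ) : ℝ :=
  Real.exp (-(1 - γ * (x - μ) / σ) ^ (1 / γ))

/-- Extension of the model cdf `F` evaluated along the ordered sample
`x 1 < x 2 < ⋯ < x n`, using the conventions `F(x₀) ≡ 0` and `F(x_{n+1}) ≡ 1`:
the value at index `0` is `0`, at index `n+1` it is `1`, and at index `i`
(`1 ≤ i ≤ n`) it is `F (x i)`. -/
noncomputable def extCdfSeq (F : ℝ → ℝ) (n : ℕ) (x : ℕ → ℝ) (j : ℕ) : ℝ :=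
  if j = 0 then 0 else if j = n + 1 then 1 else F (x j)

/-- The maximum product of spacings (MPS) objective
`M = −∑_{i=1}^{n+1} log Dᵢ` where `Dᵢ = F(xᵢ) − F(x_{i−1})` are the spacings
of `F` at the ordered sample, with `F(x₀) ≡ 0` and `F(x_{n+1}) ≡ 1`. -/
noncomputable def mpsObjective (F : ℝ → ℝ) (n : ℕ) (x : ℕ → ℝ) : ℝ :=
  - ∑ i ∈ Finset.range (n + 1),
      Real.log (extCdfSeq F n x (i + 1) - extCdfSeq F n x i)

/-!
The cdf of the GEV with `γ > 0` is strictly increasing up to its upper endpoint `μ + σ / γ`, where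
it reaches `1`. While the endpoint exceeds `x n`, every spacing therefore lies in `[0, 1]` and every
term `-log Dᵢ` is nonnegative, so the objective is at least its last term `-log (1 - H (x n))`.
As the endpoint decreases to `x n`, continuity sends `H (x n)` to `1` from below, and this last term
alone diverges.
-/

open Filter Set Topology

section Spacings

variable {F : ℝ → ℝ} {n : ℕ} {x : ℕ → ℝ}

theorem extCdfSeq_zero : extCdfSeq F n x 0 = 0 :=
  if_pos rfl

theorem extCdfSeq_add_one : extCdfSeq F n x (n + 1) = 1 := by
  simp [extCdfSeq]

theorem extCdfSeq_of_mem_Icc {j : ℕ} (hj : j ∈ Icc 1 n) : extCdfSeq F n x j = F (x j) := by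
  obtain ⟨one_le, le_n⟩ := hj
  rw [extCdfSeq, if_neg (by lia), if_neg (by lia)]

theorem monotoneOn_extCdfSeq (hmono : MonotoneOn (F ∘ x) (Icc 1 n)) (hfirst : 0 ≤ F (x 1))
    (hlast : F (x n) ≤ 1) : MonotoneOn (extCdfSeq F n x) (Iic (n + 1)) := by
  refine monotoneOn_of_le_add_one ordConnected_Iic fun i _ _ hi ↦ ?_
  have hin : i ≤ n := Nat.le_of_succ_le_succ hi
  rcases Nat.eq_zero_or_pos i with rfl | hpos
  · rw [extCdfSeq_zero]
    rcases Nat.eq_zero_or_pos n with rfl | hn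
    · exact extCdfSeq_add_one.symm ▸ zero_le_one
    · rwa [extCdfSeq_of_mem_Icc ⟨by lia, by lia⟩]
  have hi_mem : i ∈ Icc 1 n := ⟨hpos, hin⟩
  rw [extCdfSeq_of_mem_Icc hi_mem]
  rcases hin.eq_or_lt with rfl | hlt
  · rwa [extCdfSeq_add_one]
  · have hsucc_mem : i + 1 ∈ Icc 1 n := ⟨by lia, hlt⟩
    rw [extCdfSeq_of_mem_Icc hsucc_mem]
    exact hmono hi_mem hsucc_mem i.le_succ

theorem extCdfSeq_spacing_mem_Icc (hmono : MonotoneOn (F ∘ x) (Icc 1 n)) (hfirst : 0 ≤ F (x 1))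
    (hlast : F (x n) ≤ 1) {i : ℕ} (hi : i ≤ n) :
    extCdfSeq F n x (i + 1) - extCdfSeq F n x i ∈ Icc (0 : ℝ) 1 := by
  have hext := monotoneOn_extCdfSeq hmono hfirst hlast
  have hstep : extCdfSeq F n x i ≤ extCdfSeq F n x (i + 1) :=
    hext (mem_Iic.2 (by lia)) (mem_Iic.2 (by lia)) i.le_succ
  have hlower : 0 ≤ extCdfSeq F n x i :=
    extCdfSeq_zero.symm.trans_le (hext (mem_Iic.2 (by lia)) (mem_Iic.2 (by lia)) i.zero_le)
  have hupper : extCdfSeq F n x (i + 1) ≤ 1 :=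
    (hext (mem_Iic.2 (by lia)) (mem_Iic.2 le_rfl) (by lia)).trans_eq extCdfSeq_add_one
  exact ⟨by linarith, by linarith⟩

theorem neg_log_one_sub_le_mpsObjective (hn : 1 ≤ n) (hmono : MonotoneOn (F ∘ x) (Icc 1 n))
    (hfirst : 0 ≤ F (x 1)) (hlast : F (x n) ≤ 1) :
    -Real.log (1 - F (x n)) ≤ mpsObjective F n x := by
  have hsum : ∑ i ∈ Finset.range n,
      Real.log (extCdfSeq F n x (i + 1) - extCdfSeq F n x i) ≤ 0 :=
    Finset.sum_nonpos fun i hi ↦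
      have hD := extCdfSeq_spacing_mem_Icc hmono hfirst hlast (Finset.mem_range.1 hi).le
      Real.log_nonpos hD.1 hD.2
  rw [mpsObjective, Finset.sum_range_succ, extCdfSeq_add_one, extCdfSeq_of_mem_Icc ⟨hn, le_rfl⟩]
  linarith

theorem tendsto_mpsObjective_atTop {ι : Type*} {l : Filter ι} {G : ι → ℝ → ℝ} (hn : 1 ≤ n)
    (hmono : ∀ᶠ θ in l, MonotoneOn (G θ ∘ x) (Icc 1 n)) (hfirst : ∀ᶠ θ in l, 0 ≤ G θ (x 1))
    (hlast : Tendsto (fun θ ↦ G θ (x n)) l (𝓝[<] 1)) :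
    Tendsto (fun θ ↦ mpsObjective (G θ) n x) l atTop := by
  obtain ⟨hlim, hlt⟩ := tendsto_nhdsWithin_iff.1 hlast
  have hspacing : Tendsto (fun θ ↦ 1 - G θ (x n)) l (𝓝[>] 0) :=
    tendsto_nhdsWithin_iff.2
      ⟨by simpa only [sub_self] using hlim.const_sub 1, hlt.mono fun _ h ↦ mem_Ioi.2 (sub_pos.2 h)⟩
  have hterm : Tendsto (fun θ ↦ -Real.log (1 - G θ (x n))) l atTop :=
    tendsto_neg_atBot_atTop.comp (Real.tendsto_log_nhdsGT_zero.comp hspacing)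
  refine tendsto_atTop_mono' l ?_ hterm
  filter_upwards [hmono, hfirst, hlt] with θ hmonoθ hfirstθ hltθ
  exact neg_log_one_sub_le_mpsObjective hn hmonoθ hfirstθ (le_of_lt hltθ)

end Spacings

section GEV

variable {γ σ : ℝ}

theorem gevCdf_pos (γ μ σ y : ℝ) : 0 < gevCdf γ μ σ y :=
  Real.exp_pos _

theorem gevCdf_endpoint (hγ : γ ≠ 0) (hσ : σ ≠ 0) (μ : ℝ) :
    gevCdf γ μ σ (μ + σ / γ) = 1 := by
  have hbase : 1 - γ * (μ + σ / γ - μ) / σ = 0 := by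
    field_simp
    ring
  rw [gevCdf, hbase, Real.zero_rpow (one_div_ne_zero hγ), neg_zero, Real.exp_zero]

theorem strictMonoOn_gevCdf (hγ : 0 < γ) (hσ : 0 < σ) (μ : ℝ) :
    StrictMonoOn (gevCdf γ μ σ) (Iic (μ + σ / γ)) := by
  intro y _ z hz hyz
  have hbase_nonneg : 0 ≤ 1 - γ * (z - μ) / σ := by
    have hz' : z - μ ≤ σ / γ := sub_le_iff_le_add'.2 hz
    rw [sub_nonneg, div_le_one hσ]
    exact (le_div_iff₀' hγ).1 hz'
  have hbase_lt : 1 - γ * (z - μ) / σ < 1 - γ * (y - μ) / σ := by gcongr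
  exact Real.exp_lt_exp.2 (neg_lt_neg
    (Real.rpow_lt_rpow hbase_nonneg hbase_lt (one_div_pos.2 hγ)))

theorem gevCdf_lt_one (hγ : 0 < γ) (hσ : 0 < σ) {μ y : ℝ} (hy : y < μ + σ / γ) :
    gevCdf γ μ σ y < 1 :=
  (strictMonoOn_gevCdf hγ hσ μ hy.le self_mem_Iic hy).trans_eq
    (gevCdf_endpoint hγ.ne' hσ.ne' μ)

theorem continuous_gevCdf_location (hγ : 0 ≤ γ) (σ y : ℝ) :
    Continuous fun μ ↦ gevCdf γ μ σ y := by
  have hbase : Continuous fun μ ↦ 1 - γ * (y - μ) / σ := by fun_prop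
  exact Real.continuous_exp.comp (hbase.rpow_const fun _ ↦ .inr (one_div_nonneg.2 hγ)).neg

theorem tendsto_gevCdf_nhdsLT_one (hγ : 0 < γ) (hσ : 0 < σ) (y : ℝ) :
    Tendsto (fun μ ↦ gevCdf γ μ σ y) (𝓝[>] (y - σ / γ)) (𝓝[<] 1) := by
  have hboundary : gevCdf γ (y - σ / γ) σ y = 1 := by
    simpa only [sub_add_cancel] using gevCdf_endpoint hγ.ne' hσ.ne' (y - σ / γ)
  have hlim : Tendsto (fun μ ↦ gevCdf γ μ σ y) (𝓝 (y - σ / γ)) (𝓝 1) :=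
    (continuous_gevCdf_location hγ.le σ y).tendsto' _ _ hboundary
  refine tendsto_nhdsWithin_iff.2 ⟨hlim.mono_left nhdsWithin_le_nhds, ?_⟩
  filter_upwards [self_mem_nhdsWithin] with μ hμ
  exact gevCdf_lt_one hγ hσ (sub_lt_iff_lt_add.1 hμ)

end GEV

/-- Fix `γ > 0`, `σ > 0` and an ordered sample `x 1 < x 2 < ⋯ < x n`. As `μ`
decreases to `x n − σ/γ` (equivalently, as the upper endpoint `μ + σ/γ`
decreases to the largest observation `x n`), the MPS objective for the GEV
tends to `+∞`; hence the MPS objective does not collapse at the boundary of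
the parameter space. -/
theorem gev_mps_objective_tendsto_atTop (γ σ : ℝ) (hγ : 0 < γ) (hσ : 0 < σ)
    (n : ℕ) (hn : 1 ≤ n) (x : ℕ → ℝ) (hx : StrictMonoOn x (Set.Icc 1 n)) :
    Filter.Tendsto (fun μ => mpsObjective (gevCdf γ μ σ) n x)
      (nhdsWithin (x n - σ / γ) (Set.Ioi (x n - σ / γ))) Filter.atTop := by
  refine tendsto_mpsObjective_atTop hn ?_ (.of_forall fun μ ↦ (gevCdf_pos γ μ σ (x 1)).le)
    (tendsto_gevCdf_nhdsLT_one hγ hσ (x n))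
  filter_upwards [self_mem_nhdsWithin] with μ hμ
  have hsample : MapsTo x (Icc 1 n) (Iic (μ + σ / γ)) := fun i hi ↦
    (hx.monotoneOn hi ⟨hn, le_rfl⟩ hi.2).trans (sub_lt_iff_lt_add.1 hμ).le
  exact ((strictMonoOn_gevCdf hγ hσ μ).comp hx hsample).monotoneOn
end
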